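/- arXiv:math/0303278 — 6 statements merged into one kernel-verified Lean document; each statement's English description precedes it below -/
import Mathlib

section
/- Let E be a complex normed vector space, let u, v : E → ℂ be complex-Fréchet differentiable at z₀ ∈ E, let t ∈ ℂ, and suppose v(z₀) ≠ 0 and u(z₀) = t · v(z₀). Let f(z) = Re(u(z)/v(z)). Then f is real-Fréchet differentiable at z₀ and the operator norm of its real Fréchet derivative satisfies ‖fderiv ℝ f z₀‖ = ‖fderiv ℂ u z₀ − t • fderiv ℂ v z₀‖ / ‖v(z₀)‖. -/
theorem norm_re_comp_aux {E : Type*} [NormedAddCommGroup E] [NormedSpace ℂ E] (L : E →L[ℂ] ℂ) :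
    ‖Complex.reCLM.comp (L.restrictScalars ℝ)‖ = ‖L‖ := by
  rw [← StrongDual.norm_extendRCLike (𝕜 := ℂ)]
  congr 1
  ext x
  rw [StrongDual.extendRCLike_apply]
  apply Complex.ext <;> simp

/-- For the family of hypersurfaces `Y_t = {u = t·v}`, the function `f = Re (u/v)`
is real-Fréchet differentiable at a point of `Y_t` and the operator norm of its
derivative is `‖du − t • dv‖ / ‖v‖` (the identity `|∇f| = |d(u − t v)|/|v|`). -/
theorem norm_fderiv_re_quotient
    {E : Type*} [NormedAddCommGroup E] [NormedSpace ℂ E]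
    (u v : E → ℂ) (z₀ : E) (t : ℂ)
    (hu : DifferentiableAt ℂ u z₀) (hv : DifferentiableAt ℂ v z₀)
    (hv0 : v z₀ ≠ 0) (huv : u z₀ = t * v z₀) :
    DifferentiableAt ℝ (fun z => (u z / v z).re) z₀ ∧
    ‖fderiv ℝ (fun z => (u z / v z).re) z₀‖
      = ‖fderiv ℂ u z₀ - t • fderiv ℂ v z₀‖ / ‖v z₀‖ := by
  have hev : ∀ᶠ z in nhds z₀, v z ≠ 0 := hv.continuousAt.eventually_ne hv0
  have hg : DifferentiableAt ℂ (fun z => u z / v z) z₀ := by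
    simp only [div_eq_mul_inv]
    exact hu.mul (hv.inv hv0)
  have hu' : fderiv ℂ u z₀ = (u z₀ / v z₀) • fderiv ℂ v z₀
      + v z₀ • fderiv ℂ (fun z => u z / v z) z₀ := by
    rw [← fderiv_fun_mul hg hv]
    apply Filter.EventuallyEq.fderiv_eq
    filter_upwards [hev] with z hz
    field_simp
  have ht : u z₀ / v z₀ = t := by rw [huv]; field_simp
  rw [ht] at hu'
  have hd := Complex.reCLM.hasFDerivAt.comp z₀ (hg.hasFDerivAt.restrictScalars ℝ)
  have hd' : HasFDerivAt (fun z => (u z / v z).re)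
      (Complex.reCLM.comp ((fderiv ℂ (fun z => u z / v z) z₀).restrictScalars ℝ)) z₀ := hd
  refine ⟨hd'.differentiableAt, ?_⟩
  rw [hd'.fderiv, norm_re_comp_aux, hu', add_sub_cancel_left, norm_smul,
    mul_div_cancel_left₀ _ (norm_ne_zero_iff.mpr hv0)]
end

section
/- Let n ≥ 1 and let M be an n × n complex matrix such that ‖M i j‖ ≤ C for all indices i, j (with C ≥ 0) and |det M| ≥ c for some c > 0. Then M is invertible and every entry of its inverse satisfies ‖M⁻¹ i j‖ ≤ (n−1)! · C^(n−1) / c. -/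
open scoped Matrix

/-- A square complex matrix with entries bounded by `C` and determinant of absolute
value at least `c > 0` is invertible, and the entries of its inverse are bounded by
`(n−1)! · C^(n−1) / c`. -/
theorem inverse_entries_bound
    (n : ℕ) (hn : 1 ≤ n) (M : Matrix (Fin n) (Fin n) ℂ) (C c : ℝ)
    (hC : 0 ≤ C) (hc : 0 < c)
    (hbd : ∀ i j, ‖M i j‖ ≤ C) (hdet : c ≤ ‖M.det‖) :
    IsUnit M ∧ ∀ i j, ‖M⁻¹ i j‖ ≤ (Nat.factorial (n - 1) : ℝ) * C ^ (n - 1) / c := by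
  have hne : M.det ≠ 0 := by
    intro h
    rw [h, norm_zero] at hdet
    linarith
  refine ⟨(Matrix.isUnit_iff_isUnit_det M).2 (isUnit_iff_ne_zero.2 hne), ?_⟩
  intro i j
  obtain ⟨m, rfl⟩ : ∃ m, n = m + 1 := ⟨n - 1, by omega⟩
  have key : ‖M.adjugate i j‖ ≤ (Nat.factorial m : ℝ) * C ^ m := by
    rw [Matrix.adjugate_fin_succ_eq_det_submatrix, norm_mul, norm_pow, norm_neg, norm_one,
      one_pow, one_mul]
    have h := Matrix.det_le (A := M.submatrix j.succAbove i.succAbove)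
      (abv := NormedField.toAbsoluteValue ℂ) (x := C) (fun a b => hbd _ _)
    rw [Fintype.card_fin, nsmul_eq_mul] at h
    exact h
  rw [Matrix.inv_def, Matrix.smul_apply, smul_eq_mul, norm_mul, Ring.inverse_eq_inv', norm_inv,
    Nat.add_sub_cancel, inv_mul_eq_div]
  exact div_le_div₀ (by positivity) key hc hdet
end

section
/- Let n ≥ 1, let z : Fin n → ℂ with z i ≠ 0 for all i, and let Z be the diagonal matrix with diagonal entries z i. Let G be an n × n complex matrix such that the conjugated matrix Z G Z⁻¹ has all entries bounded: ‖G i j‖ · |z i| / |z j| ≤ C for all i, j (with C ≥ 0), and suppose |det G| ≥ c for some c > 0. Then G is invertible and Z G⁻¹ Z⁻¹ has bounded entries: ‖G⁻¹ i j‖ · |z i| / |z j| ≤ (n−1)! · C^(n−1) / c for all i, j. -/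
open scoped Matrix

/-- Lemma 3.1: if `G` is T-bounded (i.e. `Z G Z⁻¹` is bounded, where
`Z = Diag(z₁,…,zₙ)`, equivalently `‖G i j‖·|z i|/|z j| ≤ C`) and `|det G| ≥ c > 0`,
then `G⁻¹` is T-bounded with the explicit bound `(n−1)! · C^(n−1) / c`. -/
theorem T_bounded_inverse
    (n : ℕ) (hn : 1 ≤ n) (z : Fin n → ℂ) (hz : ∀ i, z i ≠ 0)
    (G : Matrix (Fin n) (Fin n) ℂ) (C c : ℝ) (hC : 0 ≤ C) (hc : 0 < c)
    (hTbd : ∀ i j, ‖G i j‖ * ‖z i‖ / ‖z j‖ ≤ C) (hdet : c ≤ ‖G.det‖) :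
    IsUnit G ∧
      ∀ i j, ‖G⁻¹ i j‖ * ‖z i‖ / ‖z j‖ ≤ (Nat.factorial (n - 1) : ℝ) * C ^ (n - 1) / c := by
  have hdet0 : G.det ≠ 0 := by
    intro h
    rw [h, norm_zero] at hdet
    linarith
  have hu : IsUnit G.det := isUnit_iff_ne_zero.mpr hdet0
  refine ⟨(Matrix.isUnit_iff_isUnit_det G).mpr hu, ?_⟩
  set D : Matrix (Fin n) (Fin n) ℂ := Matrix.diagonal z with hD
  set E : Matrix (Fin n) (Fin n) ℂ := Matrix.diagonal (fun i => (z i)⁻¹) with hE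
  have hDE : D * E = 1 := by
    rw [hD, hE, Matrix.diagonal_mul_diagonal, ← Matrix.diagonal_one]
    congr 1
    funext i
    exact mul_inv_cancel₀ (hz i)
  have hED : E * D = 1 := mul_eq_one_comm.mp hDE
  have hHdet : (D * G * E).det = G.det := Matrix.det_conj_of_mul_eq_one hDE hED
  have hHinv : (D * G * E)⁻¹ = D * G⁻¹ * E := by
    apply Matrix.inv_eq_right_inv
    calc D * G * E * (D * G⁻¹ * E) = D * G * (E * D) * G⁻¹ * E := by
          simp only [Matrix.mul_assoc]
      _ = D * (G * G⁻¹) * E := by rw [hED]; simp only [Matrix.mul_assoc, Matrix.one_mul]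
      _ = 1 := by rw [Matrix.mul_nonsing_inv G hu, Matrix.mul_one, hDE]
  have hentry : ∀ (M : Matrix (Fin n) (Fin n) ℂ) (i j : Fin n),
      ‖(D * M * E) i j‖ = ‖M i j‖ * ‖z i‖ / ‖z j‖ := by
    intro M i j
    rw [hD, hE, Matrix.mul_diagonal, Matrix.diagonal_mul, norm_mul, norm_mul, norm_inv]
    ring
  intro i j
  have hH : ∀ i j, ‖(D * G * E) i j‖ ≤ C := fun i j => by
    rw [hentry]
    exact hTbd i j
  rw [← hentry, ← hHinv]
  rw [← hHdet] at hdet hu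
  generalize D * G * E = H at hH hdet hu
  clear_value D E
  clear hentry hHdet hHinv hD hE hDE hED hTbd hdet0 hz D E
  obtain ⟨m, rfl⟩ : ∃ m, n = m + 1 := ⟨n - 1, by omega⟩
  have hadj : ‖H.adjugate i j‖ ≤ (Nat.factorial m : ℝ) * C ^ m := by
    rw [Matrix.adjugate_fin_succ_eq_det_submatrix, norm_mul, norm_pow, norm_neg, norm_one,
      one_pow, one_mul]
    have h := Matrix.det_le (A := H.submatrix j.succAbove i.succAbove)
      (abv := NormedField.toAbsoluteValue ℂ) (x := C) (fun a b => hH _ _)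
    rw [Fintype.card_fin, nsmul_eq_mul] at h
    exact h
  rw [Matrix.inv_def, Matrix.smul_apply, smul_eq_mul, norm_mul, Ring.inverse_eq_inv', norm_inv,
    Nat.add_sub_cancel, inv_mul_eq_div]
  exact div_le_div₀ (by positivity) hadj hc hdet
end

section
/- Let n ≥ 1, let f : ℝⁿ → ℝ be twice continuously differentiable, let k be a coordinate index, p > 0, 0 < α ≤ 1 and H ≥ 0. Assume f is periodic with period p in the k-th coordinate, i.e. f(x + p·e_k) = f(x) for all x, and that the second partial derivative ∂²f/∂x_k² is α-Hölder with constant H: |∂²_{kk}f(x) − ∂²_{kk}f(y)| ≤ H·‖x − y‖^α for all x, y. Then |∂f/∂x_k (x)| ≤ H · p^(1+α) for every x ∈ ℝⁿ. -/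
/-- Rescaled Lemma 3.5, first estimate: if `f : ℝⁿ → ℝ` is `C²`, periodic with period
`p` in the `k`-th coordinate, and the pure second derivative `∂²_{kk} f` is `α`-Hölder
with constant `H`, then `|∂f/∂x_k| ≤ H · p^(1+α)` everywhere. -/
theorem periodic_first_derivative_bound
    (n : ℕ) (hn : 1 ≤ n) (f : EuclideanSpace ℝ (Fin n) → ℝ)
    (hf : ContDiff ℝ 2 f) (k : Fin n) (p α H : ℝ)
    (hp : 0 < p) (hα0 : 0 < α) (hα1 : α ≤ 1) (hH : 0 ≤ H)
    (hper : ∀ x, f (x + p • EuclideanSpace.single k 1) = f x)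
    (hHolder : ∀ x y,
      |fderiv ℝ (fun w => fderiv ℝ f w (EuclideanSpace.single k 1)) x
          (EuclideanSpace.single k 1) -
        fderiv ℝ (fun w => fderiv ℝ f w (EuclideanSpace.single k 1)) y
          (EuclideanSpace.single k 1)| ≤ H * ‖x - y‖ ^ α) :
    ∀ x, |fderiv ℝ f x (EuclideanSpace.single k 1)| ≤ H * p ^ (1 + α) := by
  intro x
  set e : EuclideanSpace ℝ (Fin n) := EuclideanSpace.single k 1 with he
  have hnorm : ‖e‖ = 1 := by simp [he]
  have hfd : Differentiable ℝ f := hf.differentiable (by norm_num)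
  have hf1 : ContDiff ℝ 1 (fderiv ℝ f) := hf.fderiv_right (by norm_num)
  have hu1 : ContDiff ℝ 1 (fun w => fderiv ℝ f w e) := hf1.clm_apply contDiff_const
  have hud : Differentiable ℝ (fun w => fderiv ℝ f w e) := hu1.differentiable (by norm_num)
  have hline : ∀ t : ℝ, HasDerivAt (fun t : ℝ => x + t • e) e t := by
    intro t
    simpa using ((hasDerivAt_id t).smul_const e).const_add x
  have hg : ∀ t : ℝ, HasDerivAt (fun t : ℝ => f (x + t • e)) (fderiv ℝ f (x + t • e) e) t :=
    fun t => (hfd (x + t • e)).hasFDerivAt.comp_hasDerivAt t (hline t)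
  have hu : ∀ t : ℝ, HasDerivAt (fun t : ℝ => fderiv ℝ f (x + t • e) e)
      (fderiv ℝ (fun w => fderiv ℝ f w e) (x + t • e) e) t :=
    fun t => HasFDerivAt.comp_hasDerivAt (l := fun w => fderiv ℝ f w e) t
      (hud (x + t • e)).hasFDerivAt (hline t)
  have hperu : fderiv ℝ f (x + p • e) = fderiv ℝ f x := by
    rw [← fderiv_comp_add_right]
    congr 1
    exact funext hper
  obtain ⟨c, hc, hc0⟩ := exists_hasDerivAt_eq_zero hp
    (fun t _ => (hg t).continuousAt.continuousWithinAt)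
    (by simp [hper x]) (fun t _ => hg t)
  obtain ⟨d, hd, hd0⟩ := exists_hasDerivAt_eq_zero hp
    (fun t _ => (hu t).continuousAt.continuousWithinAt)
    (by simp [hperu]) (fun t _ => hu t)
  have hbound : ∀ t ∈ Set.Icc (0 : ℝ) p,
      ‖fderiv ℝ (fun w => fderiv ℝ f w e) (x + t • e) e‖ ≤ H * p ^ α := by
    intro t ht
    have h := hHolder (x + t • e) (x + d • e)
    rw [hd0, sub_zero] at h
    refine h.trans ?_
    have h2 : ‖x + t • e - (x + d • e)‖ ≤ p := by
      rw [add_sub_add_left_eq_sub, ← sub_smul, norm_smul, hnorm, mul_one, Real.norm_eq_abs,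
        abs_le]
      constructor <;> linarith [ht.1, ht.2, hd.1, hd.2]
    gcongr
  have key := (convex_Icc (0 : ℝ) p).norm_image_sub_le_of_norm_hasDerivWithin_le
    (fun t _ => (hu t).hasDerivWithinAt) hbound ⟨hc.1.le, hc.2.le⟩ ⟨le_rfl, hp.le⟩
  rw [hc0] at key
  simp only [zero_smul, add_zero, sub_zero, zero_sub, norm_neg, Real.norm_eq_abs] at key
  rw [abs_of_pos hc.1] at key
  calc |fderiv ℝ f x e| ≤ H * p ^ α * c := key
    _ ≤ H * p ^ α * p := by gcongr; exact hc.2.le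
    _ = H * p ^ (1 + α) := by rw [Real.rpow_add hp, Real.rpow_one]; ring
end

section
/- Let n ≥ 1, let f : ℝⁿ → ℝ be twice continuously differentiable, let k be a coordinate index, p > 0, 0 < α ≤ 1 and H ≥ 0. Assume f is periodic with period p in the k-th coordinate, i.e. f(x + p·e_k) = f(x) for all x, and that |∂²_{kk}f(x) − ∂²_{kk}f(y)| ≤ H·‖x − y‖^α for all x, y. Then |∂²f/∂x_k² (x)| ≤ H · p^α for every x ∈ ℝⁿ. -/
/-- Rescaled Lemma 3.5, diagonal second-derivative estimate: if `f : ℝⁿ → ℝ` is `C²`,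
periodic with period `p` in the `k`-th coordinate, and `∂²_{kk} f` is `α`-Hölder with
constant `H`, then `|∂²f/∂x_k²| ≤ H · p^α` everywhere. -/
theorem periodic_second_derivative_bound
    (n : ℕ) (hn : 1 ≤ n) (f : EuclideanSpace ℝ (Fin n) → ℝ)
    (hf : ContDiff ℝ 2 f) (k : Fin n) (p α H : ℝ)
    (hp : 0 < p) (hα0 : 0 < α) (hα1 : α ≤ 1) (hH : 0 ≤ H)
    (hper : ∀ x, f (x + p • EuclideanSpace.single k 1) = f x)
    (hHolder : ∀ x y,
      |fderiv ℝ (fun w => fderiv ℝ f w (EuclideanSpace.single k 1)) x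
          (EuclideanSpace.single k 1) -
        fderiv ℝ (fun w => fderiv ℝ f w (EuclideanSpace.single k 1)) y
          (EuclideanSpace.single k 1)| ≤ H * ‖x - y‖ ^ α) :
    ∀ x, |fderiv ℝ (fun w => fderiv ℝ f w (EuclideanSpace.single k 1)) x
        (EuclideanSpace.single k 1)| ≤ H * p ^ α := by
  intro x
  set e : EuclideanSpace ℝ (Fin n) := EuclideanSpace.single k 1 with he
  have hne : ‖e‖ = 1 := by simp [he]
  set g : EuclideanSpace ℝ (Fin n) → ℝ := fun w => fderiv ℝ f w e with hg
  have hgd : Differentiable ℝ g := by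
    have h1 : ContDiff ℝ 1 (fderiv ℝ f) := hf.fderiv_right (by norm_num)
    exact (h1.differentiable (by norm_num)).clm_apply (differentiable_const e)
  have hgp : g (x + p • e) = g x := by
    have h2 : (fun y => f (y + p • e)) = f := funext hper
    have h3 := fderiv_comp_add_right (𝕜 := ℝ) (f := f) (x := x) (p • e)
    rw [h2] at h3
    simp only [hg]
    rw [← h3]
  have hd : ∀ t : ℝ, HasDerivAt (fun t : ℝ => g (x + t • e)) (fderiv ℝ g (x + t • e) e) t := by
    intro t
    have h4 : HasDerivAt (fun t : ℝ => x + t • e) e t := by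
      simpa using ((hasDerivAt_id t).smul_const e).const_add x
    exact (hgd (x + t • e)).hasFDerivAt.comp_hasDerivAt t h4
  obtain ⟨c, hc, hc0⟩ := exists_hasDerivAt_eq_zero (f := fun t : ℝ => g (x + t • e)) hp
    (fun t _ => (hd t).continuousAt.continuousWithinAt)
    (by simp [hgp]) (fun t _ => hd t)
  have h5 := hHolder x (x + c • e)
  rw [hc0, sub_zero] at h5
  have h6 : ‖x - (x + c • e)‖ = c := by
    rw [sub_add_cancel_left, norm_neg, norm_smul, hne, mul_one, Real.norm_of_nonneg hc.1.le]
  rw [h6] at h5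
  exact h5.trans (mul_le_mul_of_nonneg_left
    (Real.rpow_le_rpow hc.1.le hc.2.le hα0.le) hH)
end

section
/- Let n ≥ 1, let f : ℝⁿ → ℝ be twice continuously differentiable, let j, k be coordinate indices, p_j, p_k > 0, 0 < α ≤ 1 and H ≥ 0. Assume f is periodic with period p_j in the j-th coordinate and with period p_k in the k-th coordinate, and that the mixed second partial derivative ∂²f/∂x_j∂x_k is α-Hölder with constant H: |∂²_{jk}f(x) − ∂²_{jk}f(y)| ≤ H·‖x − y‖^α for all x, y. Then |∂²f/∂x_j∂x_k (x)| ≤ H · min(p_j, p_k)^α for every x ∈ ℝⁿ. -/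
theorem aux_vanish {E : Type*} [NormedAddCommGroup E] [NormedSpace ℝ E] (f : E → ℝ)
    (hf : ContDiff ℝ 2 f) (u v : E) (p : ℝ) (hp : 0 < p)
    (hper : ∀ x, f (x + p • v) = f x) (x : E) :
    ∃ t ∈ Set.Ioo 0 p, fderiv ℝ (fun w => fderiv ℝ f w u) (x + t • v) v = 0 := by
  have h1 : ContDiff ℝ 1 (fderiv ℝ f) := hf.fderiv_right (by norm_num)
  have hd : Differentiable ℝ (fun w => fderiv ℝ f w u) :=
    (h1.clm_apply contDiff_const).differentiable (by norm_num)
  have hder : ∀ t : ℝ, HasDerivAt (fun t : ℝ => fderiv ℝ f (x + t • v) u)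
      (fderiv ℝ (fun w => fderiv ℝ f w u) (x + t • v) v) t := by
    intro t
    have hl : HasDerivAt (fun t : ℝ => x + t • v) v t := by
      simpa using ((hasDerivAt_id t).smul_const v).const_add x
    exact (hd (x + t • v)).hasFDerivAt.comp_hasDerivAt t hl
  have hpf : fderiv ℝ f (x + p • v) = fderiv ℝ f x := by
    rw [← fderiv_comp_add_right]
    congr 1
    exact funext hper
  obtain ⟨t, ht, h⟩ := exists_hasDerivAt_eq_zero hp
    (fun t _ => (hder t).continuousAt.continuousWithinAt)
    (by simp [hpf]) (fun t _ => hder t)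
  exact ⟨t, ht, h⟩

theorem aux_symm {E : Type*} [NormedAddCommGroup E] [NormedSpace ℝ E] (f : E → ℝ)
    (hf : ContDiff ℝ 2 f) (u v x : E) :
    fderiv ℝ (fun w => fderiv ℝ f w u) x v = fderiv ℝ (fun w => fderiv ℝ f w v) x u := by
  have h1 : ContDiff ℝ 1 (fderiv ℝ f) := hf.fderiv_right (by norm_num)
  have hd : DifferentiableAt ℝ (fderiv ℝ f) x := h1.differentiable (by norm_num) x
  have key : ∀ a b : E, fderiv ℝ (fun w => fderiv ℝ f w a) x b
      = fderiv ℝ (fderiv ℝ f) x b a := by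
    intro a b
    rw [fderiv_clm_apply hd (differentiableAt_const a)]
    simp
  rw [key, key]
  exact (hf.contDiffAt.isSymmSndFDerivAt (by simp)) v u

theorem aux_bound {E : Type*} [NormedAddCommGroup E] [NormedSpace ℝ E] (g : E → ℝ)
    (v x : E) (hv : ‖v‖ = 1) (p α H : ℝ) (hα : 0 < α) (hH : 0 ≤ H)
    (hg : ∀ x y, |g x - g y| ≤ H * ‖x - y‖ ^ α)
    (h : ∃ t ∈ Set.Ioo 0 p, g (x + t • v) = 0) : |g x| ≤ H * p ^ α := by
  obtain ⟨t, ⟨ht0, htp⟩, h⟩ := h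
  have h2 := hg x (x + t • v)
  have h3 : ‖x - (x + t • v)‖ = t := by
    rw [sub_add_cancel_left, norm_neg, norm_smul, hv, mul_one, Real.norm_of_nonneg ht0.le]
  rw [h, sub_zero, h3] at h2
  exact h2.trans (mul_le_mul_of_nonneg_left (Real.rpow_le_rpow ht0.le htp.le hα.le) hH)

/-- Rescaled Lemma 3.5, mixed second-derivative estimate: if `f : ℝⁿ → ℝ` is `C²`,
periodic with periods `p_j`, `p_k` in the `j`-th and `k`-th coordinates, and the mixed
second derivative `∂²_{jk} f` is `α`-Hölder with constant `H`, then
`|∂²f/∂x_j∂x_k| ≤ H · min(p_j, p_k)^α` everywhere. -/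
theorem periodic_mixed_second_derivative_bound
    (n : ℕ) (hn : 1 ≤ n) (f : EuclideanSpace ℝ (Fin n) → ℝ)
    (hf : ContDiff ℝ 2 f) (j k : Fin n) (pj pk α H : ℝ)
    (hpj : 0 < pj) (hpk : 0 < pk) (hα0 : 0 < α) (hα1 : α ≤ 1) (hH : 0 ≤ H)
    (hperj : ∀ x, f (x + pj • EuclideanSpace.single j 1) = f x)
    (hperk : ∀ x, f (x + pk • EuclideanSpace.single k 1) = f x)
    (hHolder : ∀ x y,
      |fderiv ℝ (fun w => fderiv ℝ f w (EuclideanSpace.single j 1)) x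
          (EuclideanSpace.single k 1) -
        fderiv ℝ (fun w => fderiv ℝ f w (EuclideanSpace.single j 1)) y
          (EuclideanSpace.single k 1)| ≤ H * ‖x - y‖ ^ α) :
    ∀ x, |fderiv ℝ (fun w => fderiv ℝ f w (EuclideanSpace.single j 1)) x
        (EuclideanSpace.single k 1)| ≤ H * (min pj pk) ^ α := by
  intro x
  rcases min_choice pj pk with h | h <;> rw [h]
  · refine aux_bound (fun x => fderiv ℝ (fun w => fderiv ℝ f w (EuclideanSpace.single j 1)) x
      (EuclideanSpace.single k 1)) (EuclideanSpace.single j 1) x (by simp) pj α H hα0 hH hHolder ?_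
    obtain ⟨t, ht, h0⟩ := aux_vanish f hf (EuclideanSpace.single k 1)
      (EuclideanSpace.single j 1) pj hpj hperj x
    exact ⟨t, ht, (aux_symm f hf _ _ _).trans h0⟩
  · exact aux_bound (fun x => fderiv ℝ (fun w => fderiv ℝ f w (EuclideanSpace.single j 1)) x
      (EuclideanSpace.single k 1)) (EuclideanSpace.single k 1) x (by simp) pk α H hα0 hH hHolder
      (aux_vanish f hf _ _ pk hpk hperk x)
end
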